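/- Let w be a k-uniform word representing a graph G containing a triangle {2,3,4} (a clique whose occurrences appear in the order 2,3,4 in every block) and a vertex 7 adjacent to 2 and 4 but not to 3 and not to 1, where 1 is a fourth vertex making {1,2,3,4} a clique with block order 1,2,3,4. Then no placement of the occurrences of 7 is consistent: 7 must either lie in every interval between the i-th occurrence of 2 and the i-th occurrence of 4 (forcing 7 to alternate with 1) or in none of them (forcing 7 to alternate with 3), a contradiction. Hence no graph containing this configuration as an induced subgraph (in particular A'') is k-word-representable for any k. -/

import Mathlib

/-!
Alternation is read off prefix counts. Write `X n` for the number of occurrences of the letter `x`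
among the first `n` letters of `w`. Two distinct letters `x`, `y` alternate iff either
`Y n ≤ X n ≤ Y n + 1` for all `n` (`x` leads) or `X n ≤ Y n ≤ X n + 1` for all `n` (`y` leads);
this is `alternates_iff`. The block order of the clique says `D n ≤ C n ≤ B n ≤ A n ≤ D n + 1`
for all `n`, by `count_take_le_of_nthOcc_lt`.

Now let `e` alternate with `b` and with `d`. If `b` leads `e` and `e` leads `d`, then `E` lies
between `D` and `B`, so `A n - 1 ≤ E n ≤ A n` and `e` alternates with `a`. In the
three other cases `e` is on the same side of both `b` and `d`, or `B = D = E` throughout, and since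
`C` is squeezed between `D` and `B`, the letter `e` alternates with `c`.
-/

/-- Two distinct letters `x` and `y` alternate in the word `w` if, after deleting
all other letters, no two equal letters are adjacent. -/
def alternates {V : Type*} [DecidableEq V] (w : List V) (x y : V) : Prop :=
  (w.filter (fun z => decide (z = x ∨ z = y))).Chain' (· ≠ ·)

/-- A word `w` over the alphabet `V` represents the graph `G`: every vertex occurs in `w`,
and two distinct letters alternate in `w` iff they are adjacent in `G`. -/
def Represents {V : Type*} [DecidableEq V] (w : List V) (G : SimpleGraph V) : Prop :=
  (∀ v : V, v ∈ w) ∧ ∀ x y : V, x ≠ y → (alternates w x y ↔ G.Adj x y)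
/-- The list of positions (in increasing order) at which the letter `x` occurs in `w`. -/
def occIdx {V : Type*} [DecidableEq V] (w : List V) (x : V) : List ℕ :=
  (List.range w.length).filter (fun i => decide (w.getD i x = x))

/-- The position of the `i`-th occurrence (counted from 0) of `x` in `w`. -/
def nthOcc {V : Type*} [DecidableEq V] (w : List V) (x : V) (i : ℕ) : ℕ :=
  (occIdx w x).getD i 0

/-- The letter `x` leads `y` in `w`: in every prefix, `x` has occurred as often as `y` or exactly
once more. -/
def Leads {V : Type*} [DecidableEq V] (w : List V) (x y : V) : Prop :=
  ∀ n, (w.take n).count y ≤ (w.take n).count x ∧ (w.take n).count x ≤ (w.take n).count y + 1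

theorem leads_cons_iff {V : Type*} [DecidableEq V] (z : V) (w : List V) (x y : V) :
    Leads (z :: w) x y ↔ ∀ n,
      (w.take n).count y + (if z = y then 1 else 0) ≤ (w.take n).count x + (if z = x then 1 else 0) ∧
      (w.take n).count x + (if z = x then 1 else 0) ≤
        (w.take n).count y + (if z = y then 1 else 0) + 1 := by
  constructor
  · intro h n
    simpa [List.count_cons] using h (n + 1)
  · intro h n
    cases n with
    | zero => simp
    | succ n => simpa [List.count_cons] using h n

/-- Putting `y` in front of the word restricted to `{x, y}` forces the first letter of the
restriction to be `x`, which is what distinguishes `x` leading `y` from `y` leading `x`. -/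
theorem leads_iff_isChain {V : Type*} [DecidableEq V] (w : List V) (x y : V) (hxy : x ≠ y) :
    Leads w x y ↔ (y :: w.filter (fun z => decide (z = x ∨ z = y))).IsChain (· ≠ ·) := by
  induction w generalizing x y with
  | nil => simp [Leads]
  | cons z w ih =>
    rw [leads_cons_iff]
    by_cases hx : z = x
    · subst hx
      have h := ih y z hxy.symm
      simp only [or_comm (b := _ = z)] at h
      simp only [List.filter_cons, true_or, decide_true, if_true, if_neg hxy,
        List.isChain_cons_cons, ← h, Leads]
      constructor
      · intro h
        exact ⟨hxy.symm, fun n => by have := h n; omega⟩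
      · rintro ⟨-, h⟩ n
        have := h n
        omega
    · by_cases hy : z = y
      · subst hy
        simp only [List.filter_cons, or_true, decide_true, if_true, if_neg hx,
          List.isChain_cons_cons, ne_eq, not_true_eq_false, false_and, iff_false]
        intro h
        have := h 0
        simp at this
      · simp only [List.filter_cons, hx, hy, or_self, decide_false, if_false, ← ih x y hxy, Leads,
          add_zero, Bool.false_eq_true]

theorem alternates_iff {V : Type*} [DecidableEq V] (w : List V) (x y : V) (hxy : x ≠ y) :
    alternates w x y ↔ Leads w x y ∨ Leads w y x := by
  have h := leads_iff_isChain w y x hxy.symm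
  simp only [or_comm (b := _ = x)] at h
  rw [leads_iff_isChain w x y hxy, h]
  unfold alternates List.Chain'
  have hmem : ∀ z ∈ w.filter (fun z => decide (z = x ∨ z = y)), z = x ∨ z = y := by
    intro z hz
    simpa using (List.mem_filter.1 hz).2
  generalize w.filter (fun z => decide (z = x ∨ z = y)) = F at hmem
  cases F with
  | nil => simp
  | cons z F =>
    simp only [List.isChain_cons_cons]
    have : y ≠ z ∨ x ≠ z := by
      by_contra! h
      exact hxy (h.2.trans h.1.symm)
    tauto

theorem occIdx_cons {V : Type*} [DecidableEq V] (z : V) (w : List V) (x : V) :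
    occIdx (z :: w) x =
      if z = x then 0 :: (occIdx w x).map Nat.succ else (occIdx w x).map Nat.succ := by
  simp only [occIdx, List.length_cons, List.range_succ_eq_map, List.filter_cons, List.filter_map]
  simp [Function.comp_def]

theorem length_occIdx {V : Type*} [DecidableEq V] (w : List V) (x : V) :
    (occIdx w x).length = w.count x := by
  induction w with
  | nil => simp [occIdx]
  | cons z w ih =>
    rw [occIdx_cons, List.count_cons]
    by_cases h : z = x <;> simp [h, ih]

/-- The `i`-th occurrence of `x` (counted from 0) lies in the prefix of length `n` iff that prefix
has more than `i` occurrences of `x`. The bound on `i` excludes the default value of `nthOcc`. -/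
theorem nthOcc_lt_iff {V : Type*} [DecidableEq V] (w : List V) (x : V) (i n : ℕ)
    (hi : i < w.count x) : nthOcc w x i < n ↔ i < (w.take n).count x := by
  induction w generalizing i n with
  | nil => simp at hi
  | cons z w ih =>
    cases n with
    | zero => simp
    | succ n =>
      have key : ∀ j, j < w.count x →
          (((occIdx w x).map Nat.succ).getD j 0 < n + 1 ↔ j < (w.take n).count x) := by
        intro j hj
        rw [← ih j n hj]
        have hl : j < (occIdx w x).length := by rwa [length_occIdx]
        simp [nthOcc, List.getD, hl]
      unfold nthOcc
      rw [occIdx_cons, List.take_succ_cons, List.count_cons]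
      rw [List.count_cons] at hi
      by_cases h : z = x
      · subst h
        simp only [beq_self_eq_true, if_true] at hi ⊢
        cases i with
        | zero => simp
        | succ j =>
          rw [List.getD_cons_succ, key j (by omega)]
          omega
      · simp only [beq_iff_eq, h, if_false] at hi ⊢
        exact key i hi

/-- Order relations between occurrences become inequalities between prefix counts: `s = 0` is used
inside a block, `s = 1` from one block to the next. -/
theorem count_take_le_of_nthOcc_lt {V : Type*} [DecidableEq V] (w : List V) (k : ℕ)
    (hunif : ∀ v : V, w.count v = k) (x y : V) (s : ℕ)
    (h : ∀ i, i + s < k → nthOcc w x i < nthOcc w y (i + s)) (n : ℕ) :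
    (w.take n).count y ≤ (w.take n).count x + s := by
  by_contra! hlt
  have hle : (w.take n).count y ≤ k := hunif y ▸ (List.take_sublist n w).count_le y
  have hk : (w.take n).count x + s < k := by omega
  have hy := (nthOcc_lt_iff w y _ n (by rw [hunif]; exact hk)).2 hlt
  have hx := (nthOcc_lt_iff w x _ n (by rw [hunif]; omega)).1 ((h _ hk).trans hy)
  exact lt_irrefl _ hx

/-- Let `w` be a `k`-uniform word representing `G`, containing a clique `{a,b,c,d}`
whose `i`-th occurrences appear in the order `a,b,c,d` in each of the `k` blocks, and
let `e` be a vertex adjacent to `b` and `d` but not to `a` and `c`. Then there is no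
consistent placement of the occurrences of `e`: a contradiction.  Hence no graph
containing this configuration (in particular `A''`) is `k`-word-representable. -/
theorem stmt_17 {V : Type*} [DecidableEq V] (w : List V) (k : ℕ) (hk : 0 < k)
    (G : SimpleGraph V) (hunif : ∀ v : V, w.count v = k) (hrep : Represents w G)
    (a b c d e : V) (hnodup : [a, b, c, d, e].Nodup)
    (hab : G.Adj a b) (hac : G.Adj a c) (had : G.Adj a d)
    (hbc : G.Adj b c) (hbd : G.Adj b d) (hcd : G.Adj c d)
    (heb : G.Adj b e) (hed : G.Adj d e)
    (hea : ¬ G.Adj a e) (hec : ¬ G.Adj c e)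
    (horder : ∀ i < k,
      nthOcc w a i < nthOcc w b i ∧ nthOcc w b i < nthOcc w c i ∧
      nthOcc w c i < nthOcc w d i ∧
      (i + 1 < k → nthOcc w d i < nthOcc w a (i + 1))) :
    False := by
  have hba := count_take_le_of_nthOcc_lt w k hunif a b 0 fun i hi => (horder i hi).1
  have hcb := count_take_le_of_nthOcc_lt w k hunif b c 0 fun i hi => (horder i hi).2.1
  have hdc := count_take_le_of_nthOcc_lt w k hunif c d 0 fun i hi => (horder i hi).2.2.1
  have hda := count_take_le_of_nthOcc_lt w k hunif d a 1
    fun i hi => (horder i (by omega)).2.2.2 hi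
  have hae : a ≠ e := by rintro rfl; simp at hnodup
  have hce : c ≠ e := by rintro rfl; simp at hnodup
  have hbe := heb.ne
  have hde := hed.ne
  rw [← hrep.2 a e hae, alternates_iff w a e hae] at hea
  rw [← hrep.2 c e hce, alternates_iff w c e hce] at hec
  rw [← hrep.2 b e hbe, alternates_iff w b e hbe] at heb
  rw [← hrep.2 d e hde, alternates_iff w d e hde] at hed
  rcases heb with hb | hb <;> rcases hed with hd | hd
  · refine hec (Or.inl fun n => ?_)
    have := hba n; have := hcb n; have := hdc n; have := hb n; have := hd n
    omega
  · refine hea (Or.inl fun n => ?_)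
    have := hba n; have := hcb n; have := hdc n; have := hda n; have := hb n; have := hd n
    omega
  -- Here `E ≤ D ≤ C ≤ B ≤ E`, so all four counts agree in every prefix.
  · refine hec (Or.inl fun n => ?_)
    have := hcb n; have := hdc n; have := hb n; have := hd n
    omega
  · refine hec (Or.inr fun n => ?_)
    have := hcb n; have := hdc n; have := hb n; have := hd n
    omega
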